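/- Fix s ∈ ℝ and signs ε₁, ε₂, ε₃, ε₄ ∈ {+1, −1}. Let f₁, f₂, f₃, f₄ : ℝ → ℂ be Schwartz functions and let b : ℝ → ℂ be continuously differentiable with b and b' bounded. For k ∈ ℝ define 𝒯_b(f₁,f₂,f₃,f₄)(k) = ∫_{ℝ⁴} e^{isΦ(k,l,m,n,p)} (⟨l⟩⟨m⟩⟨n⟩⟨p⟩)^{−1} f₁(l) f₂(m) f₃(n) f₄(p) b(q) dl dm dn dp, where Φ(k,l,m,n,p) = ⟨k⟩ − ⟨l⟩ − ⟨m⟩ − ⟨n⟩ − ⟨p⟩ and q = k − ε₁l − ε₂m − ε₃n − ε₄p. Then k ↦ 𝒯_b(f₁,f₂,f₃,f₄)(k) is differentiable and for every k ∈ ℝ: ⟨k⟩ · (d/dk) 𝒯_b(f₁,f₂,f₃,f₄)(k) = i s 𝒯_{b̃}(f₁,f₂,f₃,f₄)(k) + ε₁ 𝒯_b(⟨·⟩f₁', f₂, f₃, f₄)(k) + ε₂ 𝒯_b(f₁, ⟨·⟩f₂', f₃, f₄)(k) + ε₃ 𝒯_b(f₁, f₂, ⟨·⟩f₃', f₄)(k)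 + ε₄ 𝒯_b(f₁, f₂, f₃, ⟨·⟩f₄')(k) + ∫_{ℝ⁴} Φ(k,l,m,n,p) e^{isΦ(k,l,m,n,p)} (⟨l⟩⟨m⟩⟨n⟩⟨p⟩)^{−1} f₁(l) f₂(m) f₃(n) f₄(p) b'(q) dl dm dn dp, where b̃(q) := q·b(q) and ⟨·⟩f_j' denotes the function l ↦ ⟨l⟩ f_j'(l). -/

import Mathlib

open MeasureTheory

/-- Japanese bracket `⟨x⟩ = √(1+x²)`. -/
noncomputable def jb (x : ℝ) : ℝ := Real.sqrt (1 + x ^ 2)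

/-- The phase `Φ(k,l,m,n,p) = ⟨k⟩ − ⟨l⟩ − ⟨m⟩ − ⟨n⟩ − ⟨p⟩`. -/
noncomputable def Phi (k l m n p : ℝ) : ℝ := jb k - jb l - jb m - jb n - jb p

/-- The multilinear form `𝒯_b(f₁,f₂,f₃,f₄)(k)` arising from the singular part of
the quartic nonlinear spectral distribution. -/
noncomputable def Tform (s ε₁ ε₂ ε₃ ε₄ : ℝ) (b f₁ f₂ f₃ f₄ : ℝ → ℂ) (k : ℝ) : ℂ :=
  ∫ l : ℝ, ∫ m : ℝ, ∫ n : ℝ, ∫ p : ℝ,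
    Complex.exp (Complex.I * s * Phi k l m n p) *
      (((jb l * jb m * jb n * jb p : ℝ)⁻¹ : ℝ) : ℂ) *
      f₁ l * f₂ m * f₃ n * f₄ p *
      b (k - ε₁ * l - ε₂ * m - ε₃ * n - ε₄ * p)

/-!
Up to the factor `e^{is⟨k⟩}`, the form `𝒯_b` is obtained from `b` by four nested twisted
convolutions `h ↦ ∫ e^{-is⟨l⟩} ⟨l⟩⁻¹ f(l) h(k - ε l) dl`. Differentiating in `k` therefore gives
`∂_k 𝒯_b = is (k / ⟨k⟩) 𝒯_b + 𝒯_{b'}`. Multiplication by `isk` is then commuted through the four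
convolutions until it reaches `b`, where it produces `is 𝒯_{q·b}`. Each commutator is
`ε 𝒯_b(…, ⟨·⟩f_j', …) - ε² 𝒯_{b'}(…, ⟨·⟩f_j, …)`, and for `ε² = 1` the terms in `b'` add up with
`⟨k⟩ 𝒯_{b'}` to the integral weighted by `Φ`.
-/

section Bracket

lemma one_le_jb (x : ℝ) : 1 ≤ jb x := Real.one_le_sqrt.mpr (by nlinarith [sq_nonneg x])

lemma jb_le_one_add_abs (x : ℝ) : jb x ≤ 1 + |x| := by
  rw [jb, Real.sqrt_le_left (by positivity)]
  nlinarith [sq_abs x, abs_nonneg x]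

lemma jb_ne_zero (x : ℝ) : (jb x : ℂ) ≠ 0 :=
  Complex.ofReal_ne_zero.mpr (one_pos.trans_le (one_le_jb x)).ne'

lemma norm_jb (x : ℝ) : ‖(jb x : ℂ)‖ = jb x :=
  Complex.norm_of_nonneg (zero_le_one.trans (one_le_jb x))

lemma measurable_jb : Measurable jb := by unfold jb; fun_prop

lemma hasDerivAt_jb (x : ℝ) : HasDerivAt (fun x => (jb x : ℂ)) (x / jb x) x := by
  have h : HasDerivAt jb (2 * x / (2 * jb x)) x := by
    unfold jb
    simpa using ((hasDerivAt_pow 2 x).const_add 1).sqrt (by positivity)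
  rw [mul_div_mul_left _ _ two_ne_zero] at h
  exact_mod_cast h.ofReal_comp

end Bracket

section FunctionSpaces

/-- The algebra of measurable functions of at most polynomial growth: it contains the amplitude
`b`, its derivative, and all the multipliers of the argument. -/
def polyGrowth : Subalgebra ℂ (ℝ → ℂ) where
  carrier := {h | Measurable h ∧ ∃ (C : ℝ) (N : ℕ), ∀ q, ‖h q‖ ≤ C * (1 + |q|) ^ N}
  mul_mem' := by
    rintro h h' ⟨hm, C, N, hC⟩ ⟨hm', C', N', hC'⟩
    refine ⟨hm.mul hm', C * C', N + N', fun q => ?_⟩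
    calc ‖h q * h' q‖ = ‖h q‖ * ‖h' q‖ := norm_mul _ _
      _ ≤ (C * (1 + |q|) ^ N) * (C' * (1 + |q|) ^ N') :=
        mul_le_mul (hC q) (hC' q) (norm_nonneg _) ((norm_nonneg _).trans (hC q))
      _ = C * C' * (1 + |q|) ^ (N + N') := by ring
  add_mem' := by
    rintro h h' ⟨hm, C, N, hC⟩ ⟨hm', C', N', hC'⟩
    refine ⟨hm.add hm', |C| + |C'|, N + N', fun q => ?_⟩
    have hq : 1 ≤ 1 + |q| := le_add_of_nonneg_right (abs_nonneg q)
    calc ‖h q + h' q‖ ≤ C * (1 + |q|) ^ N + C' * (1 + |q|) ^ N' := norm_add_le_of_le (hC q) (hC' q)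
      _ ≤ |C| * (1 + |q|) ^ (N + N') + |C'| * (1 + |q|) ^ (N + N') := by
        gcongr <;> first | exact le_abs_self _ | exact hq | omega
      _ = (|C| + |C'|) * (1 + |q|) ^ (N + N') := by ring
  algebraMap_mem' c := ⟨measurable_const, ‖c‖, 0, fun _ => by simp⟩

instance : CoeFun polyGrowth fun _ => ℝ → ℂ := ⟨Subtype.val⟩

/-- The rapidly decaying functions, in the `L¹` sense: those whose product with every function of
polynomial growth is integrable. They form a module over `polyGrowth`. -/
def rapidL1 : Submodule polyGrowth (ℝ → ℂ) where
  carrier := {g | ∀ u : polyGrowth, Integrable fun l => u l * g l}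
  add_mem' {g g'} hg hg' u := by
    simpa only [Pi.add_apply, mul_add] using (hg u).fun_add (hg' u)
  zero_mem' u := by simp
  smul_mem' v g hg u := by
    simpa only [Subalgebra.smul_def, smul_eq_mul, Pi.mul_apply, Subalgebra.coe_mul,
      mul_assoc] using hg (u * v)

instance : CoeFun rapidL1 fun _ => ℝ → ℂ := ⟨Subtype.val⟩

-- A shortcut: without it, elaborating `u • g` times out.
noncomputable instance : SMul polyGrowth rapidL1 := rapidL1.smul

lemma mem_polyGrowth_of_bounded {h : ℝ → ℂ} {M : ℝ} (hm : Measurable h) (hM : ∀ q, ‖h q‖ ≤ M) :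
    h ∈ polyGrowth :=
  ⟨hm, M, 0, fun q => by simpa using hM q⟩

lemma mem_polyGrowth_of_norm_le {h : ℝ → ℂ} {C : ℝ} (hm : Measurable h)
    (hC : ∀ q, ‖h q‖ ≤ C * (1 + |q|)) : h ∈ polyGrowth :=
  ⟨hm, C, 1, fun q => by simpa using hC q⟩

lemma one_add_abs_sub_le (x y : ℝ) : 1 + |x - y| ≤ (1 + |x|) * (1 + |y|) := by
  nlinarith [abs_sub x y, mul_nonneg (abs_nonneg x) (abs_nonneg y)]

lemma exists_norm_comp_sub_le (h : polyGrowth) :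
    ∃ (C : ℝ) (N : ℕ), 0 ≤ C ∧ ∀ x y, ‖h (x - y)‖ ≤ C * (1 + |x|) ^ N * (1 + |y|) ^ N := by
  obtain ⟨-, C, N, hC⟩ := h.2
  have hC₀ : 0 ≤ C := by simpa using (norm_nonneg _).trans (hC 0)
  refine ⟨C, N, hC₀, fun x y => ?_⟩
  calc ‖h (x - y)‖ ≤ C * (1 + |x - y|) ^ N := hC _
    _ ≤ C * ((1 + |x|) * (1 + |y|)) ^ N := by gcongr; exact one_add_abs_sub_le x y
    _ = C * (1 + |x|) ^ N * (1 + |y|) ^ N := by rw [mul_pow, mul_assoc]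

lemma one_add_abs_mul_pow_mem_polyGrowth (ε : ℝ) (N : ℕ) :
    (fun l : ℝ => ((1 + |ε * l| : ℝ) : ℂ) ^ N) ∈ polyGrowth := by
  refine pow_mem (mem_polyGrowth_of_norm_le (C := 1 + |ε|) (by fun_prop) fun l => ?_) N
  rw [Complex.norm_of_nonneg (by positivity), abs_mul]
  nlinarith [abs_nonneg ε, abs_nonneg l]

lemma integrable_one_add_abs_mul_pow_mul_norm (ε : ℝ) (N : ℕ) (g : rapidL1) :
    Integrable fun l => (1 + |ε * l|) ^ N * ‖g l‖ := by
  refine (g.2 ⟨_, one_add_abs_mul_pow_mem_polyGrowth ε N⟩).norm.congr (.of_forall fun l => ?_)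
  dsimp only
  rw [norm_mul, norm_pow, Complex.norm_of_nonneg (by positivity)]

lemma comp_const_sub_mul_mem_polyGrowth (h : polyGrowth) (k ε : ℝ) :
    (fun l => h (k - ε * l)) ∈ polyGrowth := by
  have hm : Measurable h := h.2.1
  obtain ⟨C, N, hC₀, hC⟩ := exists_norm_comp_sub_le h
  refine ⟨by fun_prop, C * (1 + |k|) ^ N * (1 + |ε|) ^ N, N, fun l => (hC _ _).trans ?_⟩
  have hεl : 1 + |ε * l| ≤ (1 + |ε|) * (1 + |l|) := by
    rw [abs_mul]; nlinarith [abs_nonneg ε, abs_nonneg l]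
  calc C * (1 + |k|) ^ N * (1 + |ε * l|) ^ N
      ≤ C * (1 + |k|) ^ N * ((1 + |ε|) * (1 + |l|)) ^ N := by gcongr
    _ = C * (1 + |k|) ^ N * (1 + |ε|) ^ N * (1 + |l|) ^ N := by rw [mul_pow]; ring

lemma schwartz_mem_rapidL1 (f : SchwartzMap ℝ ℂ) : ⇑f ∈ rapidL1 := by
  intro u
  obtain ⟨hu, C, N, hC⟩ := u.2
  have hf := ((f.integrable_pow_mul volume 0).add (f.integrable_pow_mul volume N)).const_mul
    (C * 2 ^ (N - 1))
  have hC₀ : 0 ≤ C := by simpa using (norm_nonneg _).trans (hC 0)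
  refine hf.mono' (by have := f.continuous.measurable; fun_prop) (.of_forall fun l => ?_)
  calc ‖u l * f l‖ ≤ C * (1 + |l|) ^ N * ‖f l‖ := by rw [norm_mul]; gcongr; exact hC l
    _ ≤ C * (2 ^ (N - 1) * (1 ^ N + |l| ^ N)) * ‖f l‖ := by
      gcongr; exact add_pow_le zero_le_one (abs_nonneg l) N
    _ = C * 2 ^ (N - 1) * (‖l‖ ^ 0 * ‖f l‖ + ‖l‖ ^ N * ‖f l‖) := by
      rw [Real.norm_eq_abs]; ring

/-- A Schwartz function as a rapidly decaying function. -/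
noncomputable def rapidOfSchwartz (f : SchwartzMap ℝ ℂ) : rapidL1 := ⟨f, schwartz_mem_rapidL1 f⟩

lemma hasDerivAt_rapidOfSchwartz (f : SchwartzMap ℝ ℂ) (x : ℝ) :
    HasDerivAt (rapidOfSchwartz f) (rapidOfSchwartz (SchwartzMap.derivCLM ℂ ℂ f) x) x :=
  f.differentiableAt.hasDerivAt

end FunctionSpaces

section TwistedConvolution

lemma integrable_mul_comp_sub (ε : ℝ) (g : rapidL1) (h : polyGrowth) (k : ℝ) :
    Integrable fun l => g l * h (k - ε * l) := by
  simpa only [mul_comm] using g.2 ⟨_, comp_const_sub_mul_mem_polyGrowth h k ε⟩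

lemma aestronglyMeasurable_rapidL1 (g : rapidL1) : AEStronglyMeasurable g := by
  simpa using (g.2 1).aestronglyMeasurable

lemma measurable_integral_mul_comp_sub (ε : ℝ) (g : rapidL1) (h : polyGrowth) :
    Measurable fun k => ∫ l, g l * h (k - ε * l) := by
  have hg := aestronglyMeasurable_rapidL1 g
  have : Measurable (hg.mk g) := hg.stronglyMeasurable_mk.measurable
  have hhm : Measurable h := h.2.1
  have hmk (k : ℝ) : ∫ l, g l * h (k - ε * l) = ∫ l, hg.mk g l * h (k - ε * l) :=
    integral_congr_ae <| hg.ae_eq_mk.mono fun l hl => by simp only [hl]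
  simp only [hmk]
  have hjoint : Measurable fun z : ℝ × ℝ => hg.mk g z.2 * h (z.1 - ε * z.2) := by fun_prop
  exact (hjoint.stronglyMeasurable.integral_prod_right (ν := volume)).measurable

lemma integral_mul_comp_sub_mem_polyGrowth (ε : ℝ) (g : rapidL1) (h : polyGrowth) :
    (fun k => ∫ l, g l * h (k - ε * l)) ∈ polyGrowth := by
  obtain ⟨C, N, -, hC⟩ := exists_norm_comp_sub_le h
  refine ⟨measurable_integral_mul_comp_sub ε g h, C * ∫ l, (1 + |ε * l|) ^ N * ‖g l‖, N,
    fun k => ?_⟩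
  calc ‖∫ l, g l * h (k - ε * l)‖
      ≤ ∫ l, C * (1 + |k|) ^ N * ((1 + |ε * l|) ^ N * ‖g l‖) := by
        refine norm_integral_le_of_norm_le
          ((integrable_one_add_abs_mul_pow_mul_norm ε N g).const_mul _) (.of_forall fun l => ?_)
        rw [norm_mul, ← mul_assoc, mul_comm]
        gcongr
        exact hC _ _
    _ = (C * ∫ l, (1 + |ε * l|) ^ N * ‖g l‖) * (1 + |k|) ^ N := by
        rw [integral_const_mul]; ring

/-- The twisted convolution `k ↦ ∫ g(l) h(k - ε l) dl`; each of the four integrals defining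
`Tform` is one. -/
noncomputable def twistedConv (ε : ℝ) : rapidL1 →ₗ[ℂ] polyGrowth →ₗ[ℂ] polyGrowth :=
  LinearMap.mk₂ ℂ (fun g h => ⟨_, integral_mul_comp_sub_mem_polyGrowth ε g h⟩)
    (fun g g' h => Subtype.ext <| funext fun k => by
      simpa [add_mul] using
        integral_add (integrable_mul_comp_sub ε g h k) (integrable_mul_comp_sub ε g' h k))
    (fun c g h => Subtype.ext <| funext fun k => by
      simpa [mul_assoc] using integral_const_mul c fun l => g l * h (k - ε * l))
    (fun g h h' => Subtype.ext <| funext fun k => by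
      simpa [mul_add] using
        integral_add (integrable_mul_comp_sub ε g h k) (integrable_mul_comp_sub ε g h' k))
    (fun c g h => Subtype.ext <| funext fun k => by
      simpa [mul_left_comm] using integral_const_mul c fun l => g l * h (k - ε * l))

lemma twistedConv_apply (ε : ℝ) (g : rapidL1) (h : polyGrowth) (k : ℝ) :
    twistedConv ε g h k = ∫ l, g l * h (k - ε * l) := rfl

lemma hasDerivAt_twistedConv (ε : ℝ) (g : rapidL1) {h h' : polyGrowth}
    (hh : ∀ q, HasDerivAt h (h' q) q) (k : ℝ) :
    HasDerivAt (twistedConv ε g h) (twistedConv ε g h' k) k := by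
  obtain ⟨C, N, hC₀, hC⟩ := exists_norm_comp_sub_le h'
  refine (hasDerivAt_integral_of_dominated_loc_of_deriv_le (s := Metric.ball k 1)
    (F' := fun x l => g l * h' (x - ε * l))
    (bound := fun l => C * (1 + (|k| + 1)) ^ N * ((1 + |ε * l|) ^ N * ‖g l‖))
    (Metric.ball_mem_nhds k one_pos)
    (.of_forall fun x => (integrable_mul_comp_sub ε g h x).aestronglyMeasurable)
    (integrable_mul_comp_sub ε g h k) (integrable_mul_comp_sub ε g h' k).aestronglyMeasurable
    (.of_forall fun l x hx => ?_) ((integrable_one_add_abs_mul_pow_mul_norm ε N g).const_mul _)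
    (.of_forall fun l x _ => ((hh (x - ε * l)).comp_sub_const x (ε * l)).const_mul (g l))).2
  have hxk : |x| ≤ |k| + 1 := by
    rw [Metric.mem_ball, Real.dist_eq] at hx
    linarith [abs_sub_abs_le_abs_sub x k]
  rw [norm_mul, ← mul_assoc, mul_comm]
  gcongr
  exact (hC _ _).trans (by gcongr)

lemma twistedConv_deriv_left (ε : ℝ) {g g' : rapidL1} {h h' : polyGrowth}
    (hg : ∀ l, HasDerivAt g (g' l) l) (hh : ∀ q, HasDerivAt h (h' q) q) :
    twistedConv ε g' h = (ε : ℂ) • twistedConv ε g h' := by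
  ext k
  have hcomp (l : ℝ) : HasDerivAt (fun l => h (k - ε * l)) (-ε * h' (k - ε * l)) l := by
    have hlin : HasDerivAt (fun l : ℝ => k - ε * l) (-ε) l := by
      simpa using ((hasDerivAt_id l).const_mul ε).const_sub k
    exact ((hh (k - ε * l)).scomp l hlin).congr_deriv (by simp)
  have hint : Integrable fun l => g l * (-ε * h' (k - ε * l)) := by
    simpa only [mul_left_comm] using (integrable_mul_comp_sub ε g h' k).const_mul (-ε : ℂ)
  have hparts := integral_mul_deriv_eq_deriv_mul_of_integrable (fun l _ => hg l)
    (fun l _ => hcomp l) hint (integrable_mul_comp_sub ε g' h k)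
    (integrable_mul_comp_sub ε g h k)
  simp only [mul_left_comm (g _) (-ε : ℂ), integral_const_mul] at hparts
  simp only [Subalgebra.coe_smul, Pi.smul_apply, smul_eq_mul, twistedConv_apply]
  linear_combination hparts

/-- The coordinate function `q ↦ q`. -/
def coord : polyGrowth :=
  ⟨fun q => (q : ℂ), mem_polyGrowth_of_norm_le (C := 1) (by fun_prop) fun q => by simp⟩

lemma coe_coord_mul (h : polyGrowth) : ⇑(coord * h) = fun q : ℝ => q * h q := rfl

lemma coord_mul_twistedConv (ε : ℝ) (g : rapidL1) (h : polyGrowth) :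
    coord * twistedConv ε g h =
      twistedConv ε g (coord * h) + (ε : ℂ) • twistedConv ε (coord • g) h := by
  ext k
  have hsplit (l : ℝ) : (k : ℂ) * (g l * h (k - ε * l)) =
      g l * (coord * h) (k - ε * l) + ε * ((coord • g) l * h (k - ε * l)) := by
    change _ = g l * ((k - ε * l : ℝ) * h (k - ε * l)) + ε * (l * g l * h (k - ε * l))
    push_cast
    ring
  change (k : ℂ) * (∫ l, g l * h (k - ε * l)) = _
  rw [← integral_const_mul]
  simp only [hsplit]
  rw [integral_add (integrable_mul_comp_sub ε g _ k)
    ((integrable_mul_comp_sub ε (coord • g) h k).const_mul _), integral_const_mul]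
  rfl

end TwistedConvolution

section OscillatingConvolution

/-- The bracket `⟨·⟩` as a multiplier. -/
noncomputable def bracket : polyGrowth :=
  ⟨fun l => (jb l : ℂ), mem_polyGrowth_of_norm_le (C := 1)
    (by have := measurable_jb; fun_prop) fun l => by
      simpa only [norm_jb, one_mul] using jb_le_one_add_abs l⟩

lemma coe_bracket_smul (f : rapidL1) : ⇑(bracket • f) = fun l : ℝ => jb l * f l := rfl

lemma norm_oscWeight_le_one (s l : ℝ) :
    ‖Complex.exp (-(Complex.I * s * jb l)) * (jb l : ℂ)⁻¹‖ ≤ 1 := by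
  have hexp : ‖Complex.exp (-(Complex.I * s * jb l))‖ = 1 := by simp [Complex.norm_exp]
  rw [norm_mul, hexp, one_mul, norm_inv, norm_jb]
  exact inv_le_one_of_one_le₀ (one_le_jb l)

/-- The factor `e^{-is⟨l⟩} ⟨l⟩⁻¹` that each integration variable contributes to `Tform`. -/
noncomputable def oscWeight (s : ℝ) : polyGrowth :=
  ⟨fun l => Complex.exp (-(Complex.I * s * jb l)) * (jb l : ℂ)⁻¹,
    mem_polyGrowth_of_bounded (by have := measurable_jb; fun_prop) (norm_oscWeight_le_one s)⟩

/-- The twisted convolution with `e^{-is⟨·⟩} ⟨·⟩⁻¹ f`. -/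
noncomputable def oscConv (s ε : ℝ) (f : rapidL1) : polyGrowth →ₗ[ℂ] polyGrowth :=
  twistedConv ε (oscWeight s • f)

lemma oscConv_apply (s ε : ℝ) (f : rapidL1) (h : polyGrowth) (k : ℝ) :
    oscConv s ε f h k = ∫ l, oscWeight s l * f l * h (k - ε * l) := rfl

lemma integrable_oscConv (s ε : ℝ) (f : rapidL1) (h : polyGrowth) (k : ℝ) :
    Integrable fun l => oscWeight s l * f l * h (k - ε * l) :=
  integrable_mul_comp_sub ε (oscWeight s • f) h k

lemma hasDerivAt_oscConv (s ε : ℝ) (f : rapidL1) {h h' : polyGrowth}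
    (hh : ∀ q, HasDerivAt h (h' q) q) (k : ℝ) :
    HasDerivAt (oscConv s ε f h) (oscConv s ε f h' k) k :=
  hasDerivAt_twistedConv ε (oscWeight s • f) hh k

lemma hasDerivAt_oscWeight_bracket_smul (s : ℝ) {f f' : rapidL1}
    (hf : ∀ l, HasDerivAt f (f' l) l) (l : ℝ) :
    HasDerivAt (oscWeight s • bracket • f)
      ((oscWeight s • bracket • f' + (-(Complex.I * s)) • coord • oscWeight s • f : rapidL1) l)
      l := by
  have hcancel : ⇑(oscWeight s • bracket • f) =
      fun l => Complex.exp (-(Complex.I * s * jb l)) * f l := by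
    funext l
    have := jb_ne_zero l
    change Complex.exp _ * (jb l : ℂ)⁻¹ * (jb l * f l) = _
    field_simp
  rw [hcancel]
  refine ((((hasDerivAt_jb l).const_mul (Complex.I * s)).fun_neg.cexp).mul (hf l)).congr_deriv ?_
  have := jb_ne_zero l
  change _ = oscWeight s l * (jb l * f' l) + -(Complex.I * s) * (l * (oscWeight s l * f l))
  simp only [oscWeight]
  field_simp
  ring

/- Write `k = (k - ε l) + ε l`. The phase turns the second term into a derivative, since
`⟨l⟩ ∂_l e^{-is⟨l⟩} = -i s l e^{-is⟨l⟩}`, and integrating by parts moves it to `f` and `h`. -/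
lemma coord_mul_oscConv (s ε : ℝ) {f f' : rapidL1} {h h' : polyGrowth}
    (hf : ∀ l, HasDerivAt f (f' l) l) (hh : ∀ q, HasDerivAt h (h' q) q) :
    (Complex.I * s) • (coord * oscConv s ε f h) =
      oscConv s ε f ((Complex.I * s) • (coord * h)) + (ε : ℂ) • oscConv s ε (bracket • f') h
        - (ε ^ 2 : ℂ) • oscConv s ε (bracket • f) h' := by
  have hparts := twistedConv_deriv_left ε (hasDerivAt_oscWeight_bracket_smul s hf) hh
  simp only [map_add, map_smul, LinearMap.add_apply, LinearMap.smul_apply, ← oscConv.eq_def]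
    at hparts
  rw [sq, ← smul_smul (ε : ℂ) ε, ← hparts, oscConv, coord_mul_twistedConv,
    LinearMap.map_smul _ (Complex.I * s)]
  module

end OscillatingConvolution

section FourfoldForm

variable (s ε₁ ε₂ ε₃ ε₄ : ℝ) (b : polyGrowth) (f₁ f₂ f₃ f₄ : rapidL1) (k : ℝ)

lemma exp_Phi_eq_mul (l m n p : ℝ) :
    Complex.exp (Complex.I * s * Phi k l m n p) =
      Complex.exp (Complex.I * s * jb k) * Complex.exp (-(Complex.I * s * jb l)) *
      Complex.exp (-(Complex.I * s * jb m)) * Complex.exp (-(Complex.I * s * jb n)) *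
      Complex.exp (-(Complex.I * s * jb p)) := by
  simp only [← Complex.exp_add, Phi]
  push_cast
  ring_nf

lemma Tform_integrand_eq (B : ℂ) (l m n p : ℝ) :
    Complex.exp (Complex.I * s * Phi k l m n p) *
      (((jb l * jb m * jb n * jb p : ℝ)⁻¹ : ℝ) : ℂ) * f₁ l * f₂ m * f₃ n * f₄ p * B =
    Complex.exp (Complex.I * s * jb k) * (oscWeight s l * f₁ l * (oscWeight s m * f₂ m *
      (oscWeight s n * f₃ n * (oscWeight s p * f₄ p * B)))) := by
  simp only [exp_Phi_eq_mul, oscWeight]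
  push_cast [mul_inv]
  ring

lemma Tform_eq_exp_mul_oscConv :
    Tform s ε₁ ε₂ ε₃ ε₄ b f₁ f₂ f₃ f₄ k = Complex.exp (Complex.I * s * jb k) *
      oscConv s ε₁ f₁ (oscConv s ε₂ f₂ (oscConv s ε₃ f₃ (oscConv s ε₄ f₄ b))) k := by
  simp only [Tform, Tform_integrand_eq, integral_const_mul, oscConv_apply]

variable {b f₁ f₂ f₃ f₄} {b' : polyGrowth} {f₁' f₂' f₃' f₄' : rapidL1}

lemma hasDerivAt_Tform (hb : ∀ q, HasDerivAt b (b' q) q) :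
    HasDerivAt (Tform s ε₁ ε₂ ε₃ ε₄ b f₁ f₂ f₃ f₄)
      (Complex.I * s * (k / jb k) * Tform s ε₁ ε₂ ε₃ ε₄ b f₁ f₂ f₃ f₄ k
        + Tform s ε₁ ε₂ ε₃ ε₄ b' f₁ f₂ f₃ f₄ k) k := by
  have hconv := hasDerivAt_oscConv s ε₁ f₁ (hasDerivAt_oscConv s ε₂ f₂
    (hasDerivAt_oscConv s ε₃ f₃ (hasDerivAt_oscConv s ε₄ f₄ hb))) k
  rw [funext (Tform_eq_exp_mul_oscConv s ε₁ ε₂ ε₃ ε₄ b f₁ f₂ f₃ f₄), Tform_eq_exp_mul_oscConv]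
  refine (((hasDerivAt_jb k).const_mul (Complex.I * s)).cexp.mul hconv).congr_deriv ?_
  ring

lemma mul_Tform (hb : ∀ q, HasDerivAt b (b' q) q)
    (hf₁ : ∀ l, HasDerivAt f₁ (f₁' l) l) (hf₂ : ∀ m, HasDerivAt f₂ (f₂' m) m)
    (hf₃ : ∀ n, HasDerivAt f₃ (f₃' n) n) (hf₄ : ∀ p, HasDerivAt f₄ (f₄' p) p) :
    Complex.I * s * k * Tform s ε₁ ε₂ ε₃ ε₄ b f₁ f₂ f₃ f₄ k =
      Complex.I * s * Tform s ε₁ ε₂ ε₃ ε₄ (coord * b : polyGrowth) f₁ f₂ f₃ f₄ k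
      + ε₁ * Tform s ε₁ ε₂ ε₃ ε₄ b (bracket • f₁' : rapidL1) f₂ f₃ f₄ k
      + ε₂ * Tform s ε₁ ε₂ ε₃ ε₄ b f₁ (bracket • f₂' : rapidL1) f₃ f₄ k
      + ε₃ * Tform s ε₁ ε₂ ε₃ ε₄ b f₁ f₂ (bracket • f₃' : rapidL1) f₄ k
      + ε₄ * Tform s ε₁ ε₂ ε₃ ε₄ b f₁ f₂ f₃ (bracket • f₄' : rapidL1) k
      - ε₁ ^ 2 * Tform s ε₁ ε₂ ε₃ ε₄ b' (bracket • f₁ : rapidL1) f₂ f₃ f₄ k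
      - ε₂ ^ 2 * Tform s ε₁ ε₂ ε₃ ε₄ b' f₁ (bracket • f₂ : rapidL1) f₃ f₄ k
      - ε₃ ^ 2 * Tform s ε₁ ε₂ ε₃ ε₄ b' f₁ f₂ (bracket • f₃ : rapidL1) f₄ k
      - ε₄ ^ 2 * Tform s ε₁ ε₂ ε₃ ε₄ b' f₁ f₂ f₃ (bracket • f₄ : rapidL1) k := by
  have h₄ := hasDerivAt_oscConv s ε₄ f₄ hb
  have h₃ := hasDerivAt_oscConv s ε₃ f₃ h₄
  have h₂ := hasDerivAt_oscConv s ε₂ f₂ h₃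
  have hcomm := coord_mul_oscConv s ε₁ hf₁ h₂
  rw [coord_mul_oscConv s ε₂ hf₂ h₃, coord_mul_oscConv s ε₃ hf₃ h₄,
    coord_mul_oscConv s ε₄ hf₄ hb] at hcomm
  simp only [map_add, map_sub, map_smul] at hcomm
  replace hcomm := congrFun (congrArg Subtype.val hcomm) k
  simp only [Subalgebra.coe_smul, Subalgebra.coe_add, Subalgebra.coe_sub, coe_coord_mul,
    Pi.smul_apply, Pi.add_apply, Pi.sub_apply, smul_eq_mul] at hcomm
  simp only [Tform_eq_exp_mul_oscConv]
  linear_combination Complex.exp (Complex.I * s * jb k) * hcomm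

lemma integral_oscWeight_sub_jb_mul (ε : ℝ) (a c : ℂ) (f : rapidL1) (h : polyGrowth) :
    ∫ l, oscWeight s l * f l * ((a - c * jb l) * h (k - ε * l)) =
      a * oscConv s ε f h k - (c • oscConv s ε (bracket • f) h) k := by
  have hsplit (l : ℝ) : oscWeight s l * f l * ((a - c * jb l) * h (k - ε * l)) =
      a * (oscWeight s l * f l * h (k - ε * l)) -
        c * (oscWeight s l * (bracket • f) l * h (k - ε * l)) := by
    rw [coe_bracket_smul]
    ring
  simp only [hsplit]
  rw [integral_sub ((integrable_oscConv s ε f h k).const_mul _)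
    ((integrable_oscConv s ε (bracket • f) h k).const_mul _), integral_const_mul,
    integral_const_mul]
  rfl

lemma integral_oscWeight_sub_jb_mul_sub (ε : ℝ) (a c : ℂ) (f : rapidL1) (h H : polyGrowth) :
    ∫ l, oscWeight s l * f l * ((a - c * jb l) * h (k - ε * l) - H (k - ε * l)) =
      a * oscConv s ε f h k -
        (c • oscConv s ε (bracket • f) h + oscConv s ε f H) k := by
  have hfirst : Integrable fun l =>
      oscWeight s l * f l * ((a - c * jb l) * h (k - ε * l)) := by
    refine (integrable_oscConv s ε ((algebraMap ℂ polyGrowth a - c • bracket) • f) h k).congr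
      (.of_forall fun l => ?_)
    change oscWeight s l * ((a - c * jb l) * f l) * h (k - ε * l) = _
    ring
  simp only [mul_sub (oscWeight s _ * f _)]
  rw [integral_sub hfirst (integrable_oscConv s ε f H k), integral_oscWeight_sub_jb_mul,
    Subalgebra.coe_add, Pi.add_apply, ← oscConv_apply]
  ring

lemma integral_sub_jb_mul_Tform_integrand :
    ∫ l, ∫ m, ∫ n, ∫ p,
      (jb k - ε₁ ^ 2 * jb l - ε₂ ^ 2 * jb m - ε₃ ^ 2 * jb n - ε₄ ^ 2 * jb p : ℂ) *
        Complex.exp (Complex.I * s * Phi k l m n p) *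
        (((jb l * jb m * jb n * jb p : ℝ)⁻¹ : ℝ) : ℂ) * f₁ l * f₂ m * f₃ n * f₄ p *
        b (k - ε₁ * l - ε₂ * m - ε₃ * n - ε₄ * p) =
      jb k * Tform s ε₁ ε₂ ε₃ ε₄ b f₁ f₂ f₃ f₄ k
      - ε₁ ^ 2 * Tform s ε₁ ε₂ ε₃ ε₄ b (bracket • f₁ : rapidL1) f₂ f₃ f₄ k
      - ε₂ ^ 2 * Tform s ε₁ ε₂ ε₃ ε₄ b f₁ (bracket • f₂ : rapidL1) f₃ f₄ k
      - ε₃ ^ 2 * Tform s ε₁ ε₂ ε₃ ε₄ b f₁ f₂ (bracket • f₃ : rapidL1) f₄ k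
      - ε₄ ^ 2 * Tform s ε₁ ε₂ ε₃ ε₄ b f₁ f₂ f₃ (bracket • f₄ : rapidL1) k := by
  have hintegrand (l m n p : ℝ) :
      (jb k - ε₁ ^ 2 * jb l - ε₂ ^ 2 * jb m - ε₃ ^ 2 * jb n - ε₄ ^ 2 * jb p : ℂ) *
        Complex.exp (Complex.I * s * Phi k l m n p) *
        (((jb l * jb m * jb n * jb p : ℝ)⁻¹ : ℝ) : ℂ) * f₁ l * f₂ m * f₃ n * f₄ p *
        b (k - ε₁ * l - ε₂ * m - ε₃ * n - ε₄ * p) =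
      Complex.exp (Complex.I * s * jb k) * (oscWeight s l * f₁ l * (oscWeight s m * f₂ m *
        (oscWeight s n * f₃ n * (oscWeight s p * f₄ p *
          ((jb k - ε₁ ^ 2 * jb l - ε₂ ^ 2 * jb m - ε₃ ^ 2 * jb n - ε₄ ^ 2 * jb p) *
            b (k - ε₁ * l - ε₂ * m - ε₃ * n - ε₄ * p)))))) := by
    rw [← Tform_integrand_eq]
    ring
  simp only [hintegrand, integral_const_mul, integral_oscWeight_sub_jb_mul,
    integral_oscWeight_sub_jb_mul_sub]
  simp only [Tform_eq_exp_mul_oscConv, map_add, map_smul, Subalgebra.coe_smul, Subalgebra.coe_add,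
    Pi.smul_apply, Pi.add_apply, smul_eq_mul]
  ring

end FourfoldForm

theorem stmt13_general (s ε₁ ε₂ ε₃ ε₄ : ℝ) {f₁ f₂ f₃ f₄ f₁' f₂' f₃' f₄' : rapidL1}
    {b b' : polyGrowth} (hb : ∀ q, HasDerivAt b (b' q) q)
    (hf₁ : ∀ l, HasDerivAt f₁ (f₁' l) l) (hf₂ : ∀ m, HasDerivAt f₂ (f₂' m) m)
    (hf₃ : ∀ n, HasDerivAt f₃ (f₃' n) n) (hf₄ : ∀ p, HasDerivAt f₄ (f₄' p) p) :
    (∀ k : ℝ, DifferentiableAt ℝ (Tform s ε₁ ε₂ ε₃ ε₄ b f₁ f₂ f₃ f₄) k) ∧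
    ∀ k : ℝ,
      (jb k : ℂ) * deriv (Tform s ε₁ ε₂ ε₃ ε₄ b f₁ f₂ f₃ f₄) k =
        Complex.I * s * Tform s ε₁ ε₂ ε₃ ε₄ (fun q => q * b q) f₁ f₂ f₃ f₄ k
        + ε₁ * Tform s ε₁ ε₂ ε₃ ε₄ b (fun l => jb l * f₁' l) f₂ f₃ f₄ k
        + ε₂ * Tform s ε₁ ε₂ ε₃ ε₄ b f₁ (fun m => jb m * f₂' m) f₃ f₄ k
        + ε₃ * Tform s ε₁ ε₂ ε₃ ε₄ b f₁ f₂ (fun n => jb n * f₃' n) f₄ k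
        + ε₄ * Tform s ε₁ ε₂ ε₃ ε₄ b f₁ f₂ f₃ (fun p => jb p * f₄' p) k
        + ∫ l, ∫ m, ∫ n, ∫ p,
            (jb k - ε₁ ^ 2 * jb l - ε₂ ^ 2 * jb m - ε₃ ^ 2 * jb n - ε₄ ^ 2 * jb p : ℂ) *
              Complex.exp (Complex.I * s * Phi k l m n p) *
              (((jb l * jb m * jb n * jb p : ℝ)⁻¹ : ℝ) : ℂ) * f₁ l * f₂ m * f₃ n * f₄ p *
              b' (k - ε₁ * l - ε₂ * m - ε₃ * n - ε₄ * p) := by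
  have hderiv (k : ℝ) := hasDerivAt_Tform (f₁ := f₁) (f₂ := f₂) (f₃ := f₃) (f₄ := f₄)
    s ε₁ ε₂ ε₃ ε₄ k hb
  refine ⟨fun k => (hderiv k).differentiableAt, fun k => ?_⟩
  have hcancel : (jb k : ℂ) * (k / jb k) = k := mul_div_cancel₀ _ (jb_ne_zero k)
  have hmul := mul_Tform s ε₁ ε₂ ε₃ ε₄ k hb hf₁ hf₂ hf₃ hf₄
  simp only [coe_coord_mul, coe_bracket_smul] at hmul
  rw [(hderiv k).deriv, integral_sub_jb_mul_Tform_integrand]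
  simp only [coe_bracket_smul]
  linear_combination Complex.I * s * Tform s ε₁ ε₂ ε₃ ε₄ b f₁ f₂ f₃ f₄ k * hcancel + hmul

/-- Differentiation identity for the multilinear form `𝒯_b`:
`⟨k⟩ ∂_k 𝒯_b(f₁,f₂,f₃,f₄) = is 𝒯_{q·b} + Σ_j ε_j 𝒯_b(…, ⟨·⟩f_j', …) + ∫ Φ e^{isΦ} (…) b'(q)`. -/
theorem stmt13 (s ε₁ ε₂ ε₃ ε₄ : ℝ)
    (hε₁ : ε₁ = 1 ∨ ε₁ = -1) (hε₂ : ε₂ = 1 ∨ ε₂ = -1)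
    (hε₃ : ε₃ = 1 ∨ ε₃ = -1) (hε₄ : ε₄ = 1 ∨ ε₄ = -1)
    (f₁ f₂ f₃ f₄ : SchwartzMap ℝ ℂ)
    (b : ℝ → ℂ) (hb : ContDiff ℝ 1 b)
    (hbB : ∃ M : ℝ, ∀ q : ℝ, ‖b q‖ ≤ M ∧ ‖deriv b q‖ ≤ M) :
    (∀ k : ℝ, DifferentiableAt ℝ (Tform s ε₁ ε₂ ε₃ ε₄ b ⇑f₁ ⇑f₂ ⇑f₃ ⇑f₄) k) ∧
    ∀ k : ℝ,
      (jb k : ℂ) * deriv (Tform s ε₁ ε₂ ε₃ ε₄ b ⇑f₁ ⇑f₂ ⇑f₃ ⇑f₄) k =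
        Complex.I * s *
            Tform s ε₁ ε₂ ε₃ ε₄ (fun q => q * b q) ⇑f₁ ⇑f₂ ⇑f₃ ⇑f₄ k
        + (ε₁ : ℂ) *
            Tform s ε₁ ε₂ ε₃ ε₄ b (fun l => (jb l : ℂ) * deriv (⇑f₁) l) ⇑f₂ ⇑f₃ ⇑f₄ k
        + (ε₂ : ℂ) *
            Tform s ε₁ ε₂ ε₃ ε₄ b ⇑f₁ (fun m => (jb m : ℂ) * deriv (⇑f₂) m) ⇑f₃ ⇑f₄ k
        + (ε₃ : ℂ) *
            Tform s ε₁ ε₂ ε₃ ε₄ b ⇑f₁ ⇑f₂ (fun n => (jb n : ℂ) * deriv (⇑f₃) n) ⇑f₄ k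
        + (ε₄ : ℂ) *
            Tform s ε₁ ε₂ ε₃ ε₄ b ⇑f₁ ⇑f₂ ⇑f₃ (fun p => (jb p : ℂ) * deriv (⇑f₄) p) k
        + ∫ l : ℝ, ∫ m : ℝ, ∫ n : ℝ, ∫ p : ℝ,
            (Phi k l m n p : ℂ) * Complex.exp (Complex.I * s * Phi k l m n p) *
              (((jb l * jb m * jb n * jb p : ℝ)⁻¹ : ℝ) : ℂ) *
              f₁ l * f₂ m * f₃ n * f₄ p *
              deriv b (k - ε₁ * l - ε₂ * m - ε₃ * n - ε₄ * p) := by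
  obtain ⟨M, hM⟩ := hbB
  have hb_mem : b ∈ polyGrowth :=
    mem_polyGrowth_of_bounded hb.continuous.measurable fun q => (hM q).1
  have hb'_mem : deriv b ∈ polyGrowth :=
    mem_polyGrowth_of_bounded (measurable_deriv b) fun q => (hM q).2
  have hb_deriv (q : ℝ) : HasDerivAt b (deriv b q) q :=
    (hb.differentiable one_ne_zero q).hasDerivAt
  have h := stmt13_general s ε₁ ε₂ ε₃ ε₄ (b := ⟨b, hb_mem⟩) (b' := ⟨deriv b, hb'_mem⟩)
    hb_deriv (hasDerivAt_rapidOfSchwartz f₁) (hasDerivAt_rapidOfSchwartz f₂)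
    (hasDerivAt_rapidOfSchwartz f₃) (hasDerivAt_rapidOfSchwartz f₄)
  have hsq {ε : ℝ} (hε : ε = 1 ∨ ε = -1) : (ε : ℂ) ^ 2 = 1 := by
    exact_mod_cast sq_eq_one_iff.mpr hε
  simp only [hsq hε₁, hsq hε₂, hsq hε₃, hsq hε₄, one_mul] at h
  simpa only [Phi, Complex.ofReal_sub, rapidOfSchwartz, SchwartzMap.derivCLM_apply] using h
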